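/- arXiv:math/9406214 — 2 statements merged into one kernel-verified Lean document; each statement's English description precedes it below -/
import Mathlib

section
/- Weighted Lorentz comparison of a function with its maximal rearrangement: Let p > 1 and c > 0, and let w : (0,1] → [0,∞) be an increasing function satisfying w(x) ≤ c·a^{−1/p}·w(x·a) for all 0 < a ≤ 1 and all x ∈ (0,1]. Then for every integrable random variable ξ on a probability space, sup_{x∈(0,1]} w(x)·ξ**(x) ≤ (c·p/(p−1)) · sup_{x∈(0,1]} w(x)·ξ*(x). -/
open MeasureTheory ENNReal

/-- The decreasing rearrangement `ξ*(t) = inf { s ≥ 0 : P(|ξ| > s) ≤ t }`. -/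
noncomputable def decRearr {Ω : Type*} [MeasureSpace Ω] (ξ : Ω → ℝ) (t : ℝ) : ℝ :=
  sInf {s : ℝ | 0 ≤ s ∧ volume {ω | s < |ξ ω|} ≤ ENNReal.ofReal t}

/-- The maximal function `ξ**(t) = (1/t)·∫₀^t ξ*(u) du`. -/
noncomputable def maxRearr {Ω : Type*} [MeasureSpace Ω] (ξ : Ω → ℝ) (t : ℝ) : ℝ :=
  (1 / t) * ∫ u in (0 : ℝ)..t, decRearr ξ u

/-- Weighted Lorentz comparison of a function with its maximal rearrangement:
if `w(x) ≤ c·a^{−1/p}·w(x·a)` for all `0 < a ≤ 1`, then the weighted sup of `ξ**` is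
controlled by the weighted sup of `ξ*`, with constant `c·p/(p−1)`. -/
theorem weighted_sup_maxRearr_le {Ω : Type*} [MeasureSpace Ω]
    (hprob : IsProbabilityMeasure (volume : Measure Ω))
    (p c : ℝ) (hp : 1 < p) (hc : 0 < c)
    (w : ℝ → ℝ) (hw_mono : MonotoneOn w (Set.Ioc (0 : ℝ) 1))
    (hw_nonneg : ∀ x ∈ Set.Ioc (0 : ℝ) 1, 0 ≤ w x)
    (hw : ∀ a : ℝ, 0 < a → a ≤ 1 → ∀ x ∈ Set.Ioc (0 : ℝ) 1,
      w x ≤ c * a ^ (-(1 / p) : ℝ) * w (x * a))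
    (ξ : Ω → ℝ) (hξ : Integrable ξ volume) :
    ⨆ x ∈ Set.Ioc (0 : ℝ) 1, ENNReal.ofReal (w x * maxRearr ξ x) ≤
      ENNReal.ofReal (c * p / (p - 1)) *
        ⨆ x ∈ Set.Ioc (0 : ℝ) 1, ENNReal.ofReal (w x * decRearr ξ x) := by
  have hp0 : 0 < p := by linarith
  have hp1 : 0 < p - 1 := by linarith
  have hK : 0 < c * p / (p - 1) := by positivity
  have hdn : ∀ t, 0 ≤ decRearr ξ t := fun t => Real.sInf_nonneg fun s hs => hs.1
  set S := ⨆ x ∈ Set.Ioc (0 : ℝ) 1, ENNReal.ofReal (w x * decRearr ξ x) with hS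
  by_cases hT : S = ⊤
  · rw [hT, ENNReal.mul_top (by simpa using hK)]
    exact le_top
  have hM : ∀ x ∈ Set.Ioc (0 : ℝ) 1, w x * decRearr ξ x ≤ S.toReal := by
    intro x hx
    have h1 : ENNReal.ofReal (w x * decRearr ξ x) ≤ S :=
      le_iSup₂ (f := fun x (_ : x ∈ Set.Ioc (0 : ℝ) 1) =>
        ENNReal.ofReal (w x * decRearr ξ x)) x hx
    exact (ENNReal.ofReal_le_iff_le_toReal hT).1 h1
  have hM0 : 0 ≤ S.toReal := ENNReal.toReal_nonneg
  refine iSup₂_le fun x hx => ?_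
  rw [← ENNReal.ofReal_toReal hT, ← ENNReal.ofReal_mul hK.le]
  apply ENNReal.ofReal_le_ofReal
  set M := S.toReal
  obtain ⟨hx0, hx1⟩ := hx
  have hq : -1 < -(1 / p) := by
    have : 1 / p < 1 := by rw [div_lt_one hp0]; exact hp
    linarith
  have hint : IntervalIntegrable (fun u : ℝ => c * M * x ^ (1 / p) * u ^ (-(1 / p))) volume 0 x :=
    (intervalIntegral.intervalIntegrable_rpow' hq).const_mul _
  have key : ∫ u in (0 : ℝ)..x, w x * decRearr ξ u ≤
      ∫ u in (0 : ℝ)..x, c * M * x ^ (1 / p) * u ^ (-(1 / p)) := by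
    rw [intervalIntegral.integral_of_le hx0.le, intervalIntegral.integral_of_le hx0.le]
    apply integral_mono_of_nonneg
    · exact Filter.Eventually.of_forall fun u =>
        mul_nonneg (hw_nonneg x ⟨hx0, hx1⟩) (hdn u)
    · exact (intervalIntegrable_iff_integrableOn_Ioc_of_le hx0.le).1 hint
    · refine (ae_restrict_iff' measurableSet_Ioc).2 (Filter.Eventually.of_forall ?_)
      rintro u ⟨hu0, hux⟩
      have h1 := hw (u / x) (by positivity) ((div_le_one hx0).2 hux) x ⟨hx0, hx1⟩
      rw [mul_div_cancel₀ u hx0.ne'] at h1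
      have h2 := hM u ⟨hu0, hux.trans hx1⟩
      have h3 : (u / x) ^ (-(1 / p)) = x ^ (1 / p) * u ^ (-(1 / p)) := by
        rw [Real.div_rpow hu0.le hx0.le, Real.rpow_neg hx0.le, div_inv_eq_mul, mul_comm]
      rw [h3] at h1
      have h4 : 0 ≤ c * (x ^ (1 / p) * u ^ (-(1 / p))) := by positivity
      calc w x * decRearr ξ u
          ≤ c * (x ^ (1 / p) * u ^ (-(1 / p))) * w u * decRearr ξ u :=
            mul_le_mul_of_nonneg_right h1 (hdn u)
        _ = c * (x ^ (1 / p) * u ^ (-(1 / p))) * (w u * decRearr ξ u) := by ring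
        _ ≤ c * (x ^ (1 / p) * u ^ (-(1 / p))) * M := mul_le_mul_of_nonneg_left h2 h4
        _ = c * M * x ^ (1 / p) * u ^ (-(1 / p)) := by ring
  rw [intervalIntegral.integral_const_mul, intervalIntegral.integral_const_mul,
    integral_rpow (Or.inl hq), Real.zero_rpow (by linarith), sub_zero] at key
  have h5 : x ^ (1 / p) * x ^ (-(1 / p) + 1) = x := by
    rw [← Real.rpow_add hx0]
    simp
  have h6 : c * M * x ^ (1 / p) * (x ^ (-(1 / p) + 1) / (-(1 / p) + 1)) =
      x * (c * p / (p - 1) * M) := by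
    have h7 : -(1 / p) + 1 = (p - 1) / p := by field_simp; ring
    calc _ = c * M * (x ^ (1 / p) * x ^ (-(1 / p) + 1)) / (-(1 / p) + 1) := by ring
      _ = _ := by
        rw [h5, h7]
        field_simp
  rw [h6] at key
  unfold maxRearr
  calc w x * (1 / x * ∫ u in (0 : ℝ)..x, decRearr ξ u)
      = (w x * ∫ u in (0 : ℝ)..x, decRearr ξ u) / x := by ring
    _ ≤ c * p / (p - 1) * M := by
      rw [div_le_iff₀ hx0]
      linarith
end

section
/- Equivalence of the maximal rearrangement with a family of Orlicz norms: Let ξ be a nonnegative integrable random variable on a probability space and let t ∈ (0,1]. Define the Luxemburg norm ‖ξ‖_{φ_t} = inf{ λ > 0 : E[ max(ξ/λ − 1, 0) ] ≤ t }, corresponding to the Orlicz function φ_t(x) = max(x−1,0)/t. Then ‖ξ‖_{φ_t} ≤ ξ**(t) ≤ 2·‖ξ‖_{φ_t}. -/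
open MeasureTheory ENNReal

/-- The Luxemburg norm `‖ξ‖_{φ_t} = inf { λ > 0 : E[max(ξ/λ − 1, 0)] ≤ t }` associated to
the Orlicz function `φ_t(x) = max(x − 1, 0)/t`. -/
noncomputable def luxNorm {Ω : Type*} [MeasureSpace Ω] (ξ : Ω → ℝ) (t : ℝ) : ℝ :=
  sInf {lam : ℝ | 0 < lam ∧ (∫ ω, max (ξ ω / lam - 1) 0) ≤ t}

lemma decRearr_set_nonempty {Ω : Type*} [MeasureSpace Ω]
    (hprob : IsProbabilityMeasure (volume : Measure Ω))
    (ξ : Ω → ℝ) (hξnn : ∀ ω, 0 ≤ ξ ω) (hξ : Integrable ξ volume) {u : ℝ} (hu : 0 < u) :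
    {s : ℝ | 0 ≤ s ∧ volume {ω | s < |ξ ω|} ≤ ENNReal.ofReal u}.Nonempty := by
  have hE : 0 ≤ ∫ ω, ξ ω := integral_nonneg hξnn
  have hs : 0 < ((∫ ω, ξ ω) + 1) / u := by positivity
  refine ⟨((∫ ω, ξ ω) + 1) / u, hs.le, ?_⟩
  have h := mul_meas_ge_le_integral_of_nonneg (Filter.Eventually.of_forall hξnn) hξ
    (((∫ ω, ξ ω) + 1) / u)
  have hsub : {ω | ((∫ ω, ξ ω) + 1) / u < |ξ ω|} ⊆ {ω | ((∫ ω, ξ ω) + 1) / u ≤ ξ ω} := by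
    intro ω hω
    have h1 : ((∫ ω, ξ ω) + 1) / u < |ξ ω| := hω
    rw [abs_of_nonneg (hξnn ω)] at h1
    exact h1.le
  refine (measure_mono hsub).trans ?_
  rw [ENNReal.le_ofReal_iff_toReal_le (measure_ne_top _ _) hu.le]
  change (volume : Measure Ω).real _ ≤ u
  rw [div_mul_eq_mul_div, div_le_iff₀ hu] at h
  by_contra hc
  push Not at hc
  nlinarith

lemma decRearr_le_iff {Ω : Type*} [MeasureSpace Ω]
    (hprob : IsProbabilityMeasure (volume : Measure Ω))
    (ξ : Ω → ℝ) (hξnn : ∀ ω, 0 ≤ ξ ω) (hξ : Integrable ξ volume) {u : ℝ} (hu : 0 < u)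
    {s : ℝ} (hs : 0 ≤ s) :
    decRearr ξ u ≤ s ↔ volume {ω | s < |ξ ω|} ≤ ENNReal.ofReal u := by
  have hbdd : BddBelow {s : ℝ | 0 ≤ s ∧ volume {ω | s < |ξ ω|} ≤ ENNReal.ofReal u} :=
    ⟨0, fun x hx => hx.1⟩
  constructor
  · intro h
    have key : ∀ s', s < s' → volume {ω | s' < |ξ ω|} ≤ ENNReal.ofReal u := by
      intro s' hs'
      obtain ⟨r, hr, hrs⟩ := exists_lt_of_csInf_lt
        (decRearr_set_nonempty hprob ξ hξnn hξ hu) (lt_of_le_of_lt h hs')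
      refine (measure_mono ?_).trans hr.2
      intro ω hω
      exact hrs.trans hω
    have hU : {ω | s < |ξ ω|} = ⋃ n : ℕ, {ω | s + 1 / ((n : ℝ) + 1) < |ξ ω|} := by
      ext ω
      simp only [Set.mem_ofPred_eq, Set.mem_iUnion]
      constructor
      · intro h
        obtain ⟨n, hn⟩ := exists_nat_one_div_lt (sub_pos.2 h)
        exact ⟨n, by linarith⟩
      · rintro ⟨n, hn⟩
        have : 0 < 1 / ((n : ℝ) + 1) := by positivity
        linarith
    rw [hU, Monotone.measure_iUnion]
    · refine iSup_le fun n => key _ ?_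
      have : 0 < 1 / ((n : ℝ) + 1) := by positivity
      linarith
    · intro m n hmn ω hω
      have h1 : s + 1 / ((m : ℝ) + 1) < |ξ ω| := hω
      have h2 : 1 / ((n : ℝ) + 1) ≤ 1 / ((m : ℝ) + 1) := by gcongr
      change s + 1 / ((n : ℝ) + 1) < |ξ ω|
      linarith
  · intro h
    exact csInf_le hbdd ⟨hs, h⟩

lemma decRearr_nonneg {Ω : Type*} [MeasureSpace Ω] (ξ : Ω → ℝ) (u : ℝ) : 0 ≤ decRearr ξ u :=
  Real.sInf_nonneg fun _ hx => hx.1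

lemma decRearr_anti {Ω : Type*} [MeasureSpace Ω]
    (hprob : IsProbabilityMeasure (volume : Measure Ω))
    (ξ : Ω → ℝ) (hξnn : ∀ ω, 0 ≤ ξ ω) (hξ : Integrable ξ volume) {u v : ℝ} (hu : 0 < u)
    (huv : u ≤ v) : decRearr ξ v ≤ decRearr ξ u := by
  rw [decRearr_le_iff hprob ξ hξnn hξ (hu.trans_le huv) (decRearr_nonneg ξ u)]
  refine ((decRearr_le_iff hprob ξ hξnn hξ hu (decRearr_nonneg ξ u)).1 le_rfl).trans ?_
  exact ENNReal.ofReal_le_ofReal huv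

lemma decRearr_aemeas {Ω : Type*} [MeasureSpace Ω]
    (hprob : IsProbabilityMeasure (volume : Measure Ω))
    (ξ : Ω → ℝ) (hξnn : ∀ ω, 0 ≤ ξ ω) (hξ : Integrable ξ volume) :
    AEMeasurable (decRearr ξ) (volume.restrict (Set.Ioc (0 : ℝ) 1)) :=
  aemeasurable_restrict_of_antitoneOn measurableSet_Ioc
    (fun _ hu _ _ huv => decRearr_anti hprob ξ hξnn hξ hu.1 huv)

lemma decRearr_identDistrib {Ω : Type*} [MeasureSpace Ω]
    (hprob : IsProbabilityMeasure (volume : Measure Ω))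
    (ξ : Ω → ℝ) (hξnn : ∀ ω, 0 ≤ ξ ω) (hξ : Integrable ξ volume) :
    ProbabilityTheory.IdentDistrib ξ (decRearr ξ) volume
      (volume.restrict (Set.Ioc (0 : ℝ) 1)) := by
  have hm := decRearr_aemeas hprob ξ hξnn hξ
  refine ⟨hξ.aemeasurable, hm, ?_⟩
  have : IsProbabilityMeasure ((volume : Measure Ω).map ξ) :=
    Measure.isProbabilityMeasure_map hξ.aemeasurable
  refine Measure.ext_of_Iic _ _ fun a => ?_
  rw [Measure.map_apply_of_aemeasurable hξ.aemeasurable measurableSet_Iic,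
    Measure.map_apply_of_aemeasurable hm measurableSet_Iic]
  rw [Measure.restrict_apply' measurableSet_Ioc]
  rcases lt_or_ge a 0 with ha | ha
  · have h1 : ξ ⁻¹' Set.Iic a = ∅ := by
      ext ω
      have := hξnn ω
      simp only [Set.mem_preimage, Set.mem_Iic, Set.mem_empty_iff_false, iff_false]
      linarith
    have h2 : decRearr ξ ⁻¹' Set.Iic a = ∅ := by
      ext u
      have := decRearr_nonneg ξ u
      simp only [Set.mem_preimage, Set.mem_Iic, Set.mem_empty_iff_false, iff_false]
      linarith
    simp [h1, h2]
  · set p : ℝ := (volume : Measure Ω).real {ω | a < |ξ ω|} with hp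
    have hp0 : 0 ≤ p := measureReal_nonneg
    have h1 : ξ ⁻¹' Set.Iic a = {ω | a < |ξ ω|}ᶜ := by
      ext ω
      simp [abs_of_nonneg (hξnn ω)]
    have h2 : (volume : Measure ℝ) (decRearr ξ ⁻¹' Set.Iic a ∩ Set.Ioc 0 1)
        = ENNReal.ofReal (1 - p) := by
      have hsub1 : decRearr ξ ⁻¹' Set.Iic a ∩ Set.Ioc 0 1 ⊆ Set.Icc p 1 := by
        rintro u ⟨hu1, hu⟩
        refine ⟨?_, hu.2⟩
        have h3 := (decRearr_le_iff hprob ξ hξnn hξ hu.1 ha).1 hu1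
        exact (ENNReal.le_ofReal_iff_toReal_le (measure_ne_top _ _) hu.1.le).1 h3
      have hsub2 : Set.Ioc p 1 ⊆ decRearr ξ ⁻¹' Set.Iic a ∩ Set.Ioc 0 1 := by
        rintro u ⟨hu1, hu⟩
        have hu0 : 0 < u := by linarith
        refine ⟨(decRearr_le_iff hprob ξ hξnn hξ hu0 ha).2 ?_, hu0, hu⟩
        exact (ENNReal.le_ofReal_iff_toReal_le (measure_ne_top _ _) hu0.le).2 hu1.le
      apply le_antisymm
      · simpa using measure_mono (μ := volume) hsub1
      · simpa using measure_mono (μ := volume) hsub2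
    rw [h2, h1, prob_compl_eq_one_sub₀, ENNReal.ofReal_sub _ hp0, hp]
    · simp
    · exact nullMeasurableSet_lt aemeasurable_const hξ.aemeasurable.abs

/-- Equivalence of the maximal rearrangement with a family of Orlicz (Luxemburg) norms:
`‖ξ‖_{φ_t} ≤ ξ**(t) ≤ 2·‖ξ‖_{φ_t}`. -/
theorem luxNorm_le_maxRearr_le_two_luxNorm {Ω : Type*} [MeasureSpace Ω]
    (hprob : IsProbabilityMeasure (volume : Measure Ω))
    (ξ : Ω → ℝ) (hξnn : ∀ ω, 0 ≤ ξ ω) (hξ : Integrable ξ volume)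
    (t : ℝ) (ht0 : 0 < t) (ht1 : t ≤ 1) :
    luxNorm ξ t ≤ maxRearr ξ t ∧ maxRearr ξ t ≤ 2 * luxNorm ξ t := by
  have hid := decRearr_identDistrib hprob ξ hξnn hξ
  have hint : IntegrableOn (decRearr ξ) (Set.Ioc 0 1) := hid.integrable_snd hξ
  have hsub : Set.Ioc (0 : ℝ) t ⊆ Set.Ioc 0 1 := Set.Ioc_subset_Ioc_right ht1
  have hintt : IntegrableOn (decRearr ξ) (Set.Ioc 0 t) := hint.mono_set hsub
  have hI : t * maxRearr ξ t = ∫ u in Set.Ioc 0 t, decRearr ξ u := by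
    rw [maxRearr, intervalIntegral.integral_of_le ht0.le]
    field_simp
  have hphi : ∀ l : ℝ, (∫ ω, max (ξ ω / l - 1) 0)
      = ∫ u in Set.Ioc (0 : ℝ) 1, max (decRearr ξ u / l - 1) 0 := fun l =>
    (hid.comp (u := fun x : ℝ => max (x / l - 1) 0) (by fun_prop)).integral_eq
  have hphiint : ∀ l : ℝ,
      IntegrableOn (fun u => max (decRearr ξ u / l - 1) 0) (Set.Ioc 0 1) := fun l =>
    ((hint.div_const l).sub (integrable_const _)).pos_part
  have hstar : decRearr ξ t ≤ maxRearr ξ t := by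
    have h : ∫ u in Set.Ioc 0 t, decRearr ξ t ≤ ∫ u in Set.Ioc 0 t, decRearr ξ u :=
      setIntegral_mono_on (integrableOn_const (by simp)) hintt measurableSet_Ioc
        (fun u hu => decRearr_anti hprob ξ hξnn hξ hu.1 hu.2)
    rw [← hI] at h
    simp [ht0.le] at h
    exact le_of_mul_le_mul_left h ht0
  have hmem : ∀ l, maxRearr ξ t ≤ l → 0 < l →
      l ∈ {lam : ℝ | 0 < lam ∧ (∫ ω, max (ξ ω / lam - 1) 0) ≤ t} := by
    intro l hl hl0
    refine ⟨hl0, ?_⟩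
    rw [hphi]
    have h0 : ∫ u in Set.Ioc (0 : ℝ) 1, max (decRearr ξ u / l - 1) 0
        = ∫ u in Set.Ioc (0 : ℝ) t, max (decRearr ξ u / l - 1) 0 := by
      refine (setIntegral_eq_of_subset_of_forall_diff_eq_zero measurableSet_Ioc hsub ?_)
      rintro u ⟨hu, hnu⟩
      have htu : t ≤ u := by
        by_contra hc
        exact hnu ⟨hu.1, by linarith⟩
      have h1 := decRearr_anti hprob ξ hξnn hξ ht0 htu
      have h2 : decRearr ξ u / l ≤ 1 := by
        rw [div_le_one hl0]
        linarith
      exact max_eq_right (by linarith)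
    rw [h0]
    have h1 : ∫ u in Set.Ioc (0 : ℝ) t, max (decRearr ξ u / l - 1) 0
        ≤ ∫ u in Set.Ioc (0 : ℝ) t, decRearr ξ u / l := by
      refine setIntegral_mono ((hphiint l).mono_set hsub) (hintt.div_const l) fun u => ?_
      have := div_nonneg (decRearr_nonneg ξ u) hl0.le
      exact max_le (by linarith) this
    refine h1.trans ?_
    rw [integral_div, ← hI, div_le_iff₀ hl0]
    gcongr
  have hM0 : 0 ≤ maxRearr ξ t := (decRearr_nonneg ξ t).trans hstar
  constructor
  · refine le_of_forall_gt_imp_ge_of_dense fun l hl => ?_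
    exact csInf_le ⟨0, fun x hx => hx.1.le⟩ (hmem l hl.le (hM0.trans_lt hl))
  · suffices h : maxRearr ξ t / 2 ≤ luxNorm ξ t by linarith
    refine le_csInf ⟨maxRearr ξ t + 1, hmem _ (by linarith) (by linarith)⟩ ?_
    rintro l ⟨hl0, hl⟩
    rw [hphi] at hl
    have h1 : ∫ u in Set.Ioc (0 : ℝ) t, max (decRearr ξ u / l - 1) 0 ≤ t :=
      (setIntegral_mono_set (hphiint l) (Filter.Eventually.of_forall fun u => le_max_right _ _)
        hsub.eventuallyLE).trans hl
    have h2 : ∫ u in Set.Ioc (0 : ℝ) t, decRearr ξ u / l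
        ≤ ∫ u in Set.Ioc (0 : ℝ) t, (max (decRearr ξ u / l - 1) 0 + 1) := by
      refine setIntegral_mono (hintt.div_const l)
        (((hphiint l).mono_set hsub).add (integrable_const _)) fun u => ?_
      have := le_max_left (decRearr ξ u / l - 1) 0
      change _ ≤ _
      linarith
    rw [integral_add ((hphiint l).mono_set hsub) (integrable_const _), integral_div, ← hI,
      div_le_iff₀ hl0] at h2
    simp [ht0.le] at h2
    have h3 : t * maxRearr ξ t ≤ t * (2 * l) := by nlinarith
    have := le_of_mul_le_mul_left h3 ht0
    linarith
end
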